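/- Let n ≥ 2 be an integer and let P : [0,1] → [0,1] be a nonincreasing function. Then there exist measurable functions p_1,…,p_n : [0,1]^n → [0,1] with ∑_{s=1}^n p_s(x_1,…,x_n) ≤ 1 for all (x_1,…,x_n) ∈ [0,1]^n such that for each s and almost every x ∈ [0,1], ∫_{[0,1]^{n-1}} p_s(x, x_{-s}) dx_{-s} = P(x), if and only if ∫_0^t P(s) ds ≤ ∫_0^t (1−s)^{n−1} ds = (1 − (1−t)^n)/n for every t ∈ [0,1]. -/

import Mathlib

open MeasureTheory Set

/-- The product measure on `[0,1]^n` (uniform on each coordinate). -/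
noncomputable def pimeas (n : ℕ) : Measure (Fin n → ℝ) :=
  Measure.pi fun _ => volume.restrict (Icc (0:ℝ) 1)

/-!
*Necessity.* The object goes to a seller of type at most `t` only if some seller has such a type,
which happens with probability `1 - (1 - t) ^ n`.

*Sufficiency.* Let `G x = (1 - x) ^ (n - 1)`. Majorization says that every initial segment of types
carries at least as much surplus `G - P` as deficit `P - G`, so the quantile coupling matches the
deficit at each type `y` to surplus at types `x ≤ y`. If matched types swap places at rate
`1 / (G x - G y)`, the resulting Markov kernel `κ` preserves the uniform law and satisfies
`P x ≤ ∫ G dκ x`. The swap rates are feasible because `G y < P y ≤ P x < G x` for matched types, by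
monotonicity of `P`. Now redraw every type independently from `κ` and favour the seller whose new
type is lowest: the other new types are again independent and uniform, so a seller of type `x` wins
with interim probability `∫ G dκ x`. Discarding the excess of this over `P x` gives the rule.
-/

namespace Border

open Function ProbabilityTheory
open scoped ENNReal

section ProductMeasure

variable {ι : Type*} {X Y : ι → Type*} [∀ i, MeasurableSpace (X i)] [∀ i, MeasurableSpace (Y i)]

instance isProbabilityMeasure_update [DecidableEq ι] (μ : ∀ i, Measure (X i))
    [∀ i, IsProbabilityMeasure (μ i)] (s : ι) (ν : Measure (X s)) [IsProbabilityMeasure ν] (i : ι) :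
    IsProbabilityMeasure (update μ s ν i) := by
  obtain rfl | h := eq_or_ne i s
  · rwa [update_self]
  · rw [update_of_ne h]
    infer_instance

theorem measurable_update_prod [DecidableEq ι] (s : ι) :
    Measurable fun z : X s × (∀ i, X i) ↦ update z.2 s z.1 := by
  fun_prop

variable [Fintype ι]

theorem map_update_prod_pi [DecidableEq ι] (μ : ∀ i, Measure (X i))
    [∀ i, IsProbabilityMeasure (μ i)] (s : ι) (ν : Measure (X s)) [IsProbabilityMeasure ν] :
    (ν.prod (Measure.pi μ)).map (fun z ↦ update z.2 s z.1) = Measure.pi (update μ s ν) := by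
  refine (Measure.pi_eq fun B hB ↦ ?_).symm
  have preimage_box : (fun z : X s × (∀ i, X i) ↦ update z.2 s z.1) ⁻¹' univ.pi B =
      B s ×ˢ univ.pi (update B s univ) := by
    ext z
    simp only [mem_preimage, mem_univ_pi, mem_prod, forall_update_iff z.2 (fun i y ↦ y ∈ B i),
      forall_update_iff B (fun i C ↦ z.2 i ∈ C), mem_univ, true_and]
  rw [Measure.map_apply (measurable_update_prod s) (.univ_pi hB), preimage_box, Measure.prod_prod,
    Measure.pi_pi, ← Finset.mul_prod_erase _ _ (Finset.mem_univ s),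
    ← Finset.mul_prod_erase _ (fun i ↦ update μ s ν i (B i)) (Finset.mem_univ s)]
  simp only [update_self, measure_univ, one_mul]
  congr! 2 with i hi
  simp [Finset.ne_of_mem_erase hi]

theorem lintegral_pi_prod (μ : ∀ i, Measure (X i)) [∀ i, IsProbabilityMeasure (μ i)]
    {f : ∀ i, X i → ℝ≥0∞} (hf : ∀ i, Measurable (f i)) :
    ∫⁻ x, ∏ i, f i (x i) ∂Measure.pi μ = ∏ i, ∫⁻ x, f i x ∂μ i := by
  refine (lintegral_prod_eq_prod_lintegral_of_indepFun Finset.univ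
    (fun i (x : ∀ i, X i) ↦ f i (x i))
    (iIndepFun_pi fun i ↦ (hf i).aemeasurable)
    fun i ↦ (hf i).comp (measurable_pi_apply i)).trans ?_
  exact Finset.prod_congr rfl fun i _ ↦ (measurePreserving_eval μ i).lintegral_comp (hf i)

/-- The product of Markov kernels: the coordinates are updated independently of each other. -/
noncomputable def piKernel (κ : ∀ i, Kernel (X i) (Y i)) [∀ i, IsMarkovKernel (κ i)] :
    Kernel (∀ i, X i) (∀ i, Y i) where
  toFun x := Measure.pi fun i ↦ κ i (x i)
  measurable' := by
    refine .measure_of_isPiSystem_of_isProbabilityMeasure generateFrom_pi.symm isPiSystem_pi ?_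
    rintro _ ⟨B, hB, rfl⟩
    simp only [Measure.pi_pi]
    exact Finset.measurable_prod _ fun i _ ↦
      ((κ i).measurable_coe (hB i (mem_univ i))).comp (measurable_pi_apply i)

theorem piKernel_apply (κ : ∀ i, Kernel (X i) (Y i)) [∀ i, IsMarkovKernel (κ i)] (x : ∀ i, X i) :
    piKernel κ x = Measure.pi fun i ↦ κ i (x i) := rfl

instance (κ : ∀ i, Kernel (X i) (Y i)) [∀ i, IsMarkovKernel (κ i)] :
    IsMarkovKernel (piKernel κ) :=
  ⟨fun x ↦ by rw [piKernel_apply]; infer_instance⟩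

theorem bind_piKernel (κ : ∀ i, Kernel (X i) (Y i)) [∀ i, IsMarkovKernel (κ i)]
    (μ : ∀ i, Measure (X i)) [∀ i, IsProbabilityMeasure (μ i)] :
    (Measure.pi μ).bind (piKernel κ) = Measure.pi fun i ↦ (μ i).bind (κ i) := by
  refine (Measure.pi_eq fun B hB ↦ ?_).symm
  rw [Measure.bind_apply (.univ_pi hB) (Kernel.aemeasurable _)]
  simp only [piKernel_apply, Measure.pi_pi]
  rw [lintegral_pi_prod μ fun i ↦ (κ i).measurable_coe (hB i)]
  simp only [Measure.bind_apply (hB _) (Kernel.aemeasurable _)]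

end ProductMeasure

section Interim

variable {ι : Type*} [Fintype ι] [DecidableEq ι] {X : ι → Type*} [∀ i, MeasurableSpace (X i)]

/-- The interim allocation probability of agent `s` as a function of its own type, when the types
are independent with laws `μ` and `p` is the ex-post allocation probability of `s`. -/
noncomputable def interim (μ : ∀ i, Measure (X i)) (s : ι) (p : (∀ i, X i) → ℝ≥0∞) (x : X s) :
    ℝ≥0∞ :=
  ∫⁻ q, p (update q s x) ∂Measure.pi μ

variable (μ : ∀ i, Measure (X i))

theorem interim_comp_eval_mul {p : (∀ i, X i) → ℝ≥0∞} (hp : Measurable p) (s : ι)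
    (c : X s → ℝ≥0∞) (x : X s) :
    interim μ s (fun q ↦ c (q s) * p q) x = c x * interim μ s p x := by
  have hp' : Measurable fun q : ∀ i, X i ↦ p (update q s x) := hp.comp measurable_update_left
  simp only [interim, update_self, lintegral_const_mul _ hp']

variable [∀ i, IsProbabilityMeasure (μ i)]

theorem interim_ofReal {p : (∀ i, X i) → ℝ} (hp : Measurable p) (hp_mem : ∀ q, p q ∈ Icc (0 : ℝ) 1)
    {s : ι} (x : X s) :
    interim μ s (fun q ↦ ENNReal.ofReal (p q)) x =
      ENNReal.ofReal (∫ q, p (update q s x) ∂Measure.pi μ) := by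
  have integrable : Integrable (fun q ↦ p (update q s x)) (Measure.pi μ) :=
    .of_mem_Icc 0 1 (hp.comp measurable_update_left).aemeasurable (.of_forall fun _ ↦ hp_mem _)
  rw [ofReal_integral_eq_lintegral_ofReal integrable (.of_forall fun _ ↦ (hp_mem _).1), interim]

theorem interim_eq_lintegral_pi {p : (∀ i, X i) → ℝ≥0∞} (hp : Measurable p) (s : ι) (x : X s) :
    interim μ s p x = ∫⁻ q, p q ∂Measure.pi (update μ s (Measure.dirac x)) := by
  have hp' : Measurable fun z : X s × (∀ i, X i) ↦ p (update z.2 s z.1) :=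
    hp.comp (measurable_update_prod s)
  rw [← map_update_prod_pi, lintegral_map hp (measurable_update_prod s), Measure.dirac_prod,
    lintegral_map hp' measurable_prodMk_left, interim]

theorem lintegral_interim {p : (∀ i, X i) → ℝ≥0∞} (hp : Measurable p) (s : ι) :
    ∫⁻ x, interim μ s p x ∂μ s = ∫⁻ q, p q ∂Measure.pi μ := by
  have hp' : Measurable fun z : X s × (∀ i, X i) ↦ p (update z.2 s z.1) :=
    hp.comp (measurable_update_prod s)
  conv_rhs => rw [← update_eq_self s μ, ← map_update_prod_pi,
    lintegral_map hp (measurable_update_prod s), lintegral_prod _ hp'.aemeasurable]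
  rfl

theorem setLIntegral_interim {p : (∀ i, X i) → ℝ≥0∞} (hp : Measurable p) {s : ι} {A : Set (X s)}
    (hA : MeasurableSet A) :
    ∫⁻ x in A, interim μ s p x ∂μ s = ∫⁻ q in eval s ⁻¹' A, p q ∂Measure.pi μ := by
  have hA' : MeasurableSet (eval s ⁻¹' A) := measurable_pi_apply s hA
  rw [← lintegral_indicator hA, ← lintegral_indicator hA',
    ← lintegral_interim μ (hp.indicator hA') s]
  refine lintegral_congr fun x ↦ ?_
  by_cases hx : x ∈ A <;> simp [interim, indicator, hx]

theorem sum_setLIntegral_interim_le {p : ι → (∀ i, X i) → ℝ≥0∞} (hp : ∀ s, Measurable (p s))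
    (hsum : ∀ᵐ q ∂Measure.pi μ, ∑ s, p s q ≤ 1) {A : ∀ s, Set (X s)}
    (hA : ∀ s, MeasurableSet (A s)) :
    ∑ s, ∫⁻ x in A s, interim μ s (p s) x ∂μ s ≤ 1 - ∏ s, μ s (A s)ᶜ := by
  have hbox : MeasurableSet (univ.pi fun s ↦ (A s)ᶜ) := .univ_pi fun s ↦ (hA s).compl
  calc ∑ s, ∫⁻ x in A s, interim μ s (p s) x ∂μ s
    _ = ∑ s, ∫⁻ q, (eval s ⁻¹' A s).indicator (p s) q ∂Measure.pi μ := by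
      simp only [setLIntegral_interim μ (hp _) (hA _),
        lintegral_indicator (measurable_pi_apply _ (hA _))]
    _ = ∫⁻ q, ∑ s, (eval s ⁻¹' A s).indicator (p s) q ∂Measure.pi μ :=
      (lintegral_finsetSum _ fun s _ ↦ (hp s).indicator (measurable_pi_apply s (hA s))).symm
    _ ≤ ∫⁻ q, (univ.pi fun s ↦ (A s)ᶜ)ᶜ.indicator 1 q ∂Measure.pi μ := by
      refine lintegral_mono_ae (hsum.mono fun q hq ↦ ?_)
      by_cases hbox : q ∈ univ.pi fun s ↦ (A s)ᶜ
      · have outside : ∀ s, q s ∉ A s := fun s ↦ hbox s (mem_univ s)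
        simp [indicator, outside]
      · rw [indicator_of_mem hbox]
        exact (Finset.sum_le_sum fun s _ ↦ indicator_le_self _ _ q).trans hq
    _ = 1 - ∏ s, μ s (A s)ᶜ := by
      rw [lintegral_indicator_one hbox.compl, prob_compl_eq_one_sub hbox, Measure.pi_pi]

end Interim

section Quantile

open Filter Topology

theorem measure_univ_le_of_forall_Iic_le {μ ν : Measure ℝ} (h : ∀ t, ν (Iic t) ≤ μ (Iic t)) :
    ν univ ≤ μ univ :=
  le_of_tendsto_of_tendsto' (tendsto_measure_Iic_atTop ν) (tendsto_measure_Iic_atTop μ) h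

variable {μ ν : Measure ℝ} [IsFiniteMeasure μ] [IsFiniteMeasure ν]

theorem tendsto_measureReal_Iic_atBot : Tendsto (fun t ↦ μ.real (Iic t)) atBot (𝓝 0) := by
  have := tendsto_measure_iInter_atBot (μ := μ) (fun _ : ℝ ↦ measurableSet_Iic.nullMeasurableSet)
    monotone_Iic ⟨0, measure_ne_top μ _⟩
  rw [iInter_Iic_eq_empty_iff.2 (by simp), measure_empty] at this
  exact (ENNReal.tendsto_toReal ENNReal.zero_ne_top).comp this

theorem tendsto_measureReal_Iic_nhdsGT (a : ℝ) :
    Tendsto (fun t ↦ μ.real (Iic t)) (𝓝[>] a) (𝓝 (μ.real (Iic a))) := by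
  have := tendsto_measure_biInter_gt (μ := μ) (a := a)
    (fun _ _ ↦ measurableSet_Iic.nullMeasurableSet) (fun _ _ _ h ↦ Iic_subset_Iic.2 h)
    ⟨a + 1, lt_add_one a, measure_ne_top μ _⟩
  have iInter_Iic : ⋂ r > a, Iic r = Iic a := by
    ext x
    simpa using forall_gt_imp_ge_iff_le_of_dense
  rw [iInter_Iic] at this
  exact (ENNReal.tendsto_toReal (measure_ne_top μ _)).comp this

/-- The quantile function of a finite measure on the line, parametrized by mass instead of
probability. The infimum is attained for `w ∈ Ioo 0 (μ.real univ)`; elsewhere it may be a junk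
value. -/
noncomputable def quantile (μ : Measure ℝ) (w : ℝ) : ℝ :=
  sInf {t | w ≤ μ.real (Iic t)}

theorem quantile_le_iff {w : ℝ} (hw : w ∈ Ioo 0 (μ.real univ)) {t : ℝ} :
    quantile μ w ≤ t ↔ w ≤ μ.real (Iic t) := by
  have nonempty : {t | w ≤ μ.real (Iic t)}.Nonempty :=
    (((ENNReal.tendsto_toReal (measure_ne_top μ univ)).comp
      (tendsto_measure_Iic_atTop μ)).eventually_const_le hw.2).exists
  have bddBelow : BddBelow {t | w ≤ μ.real (Iic t)} := by
    obtain ⟨a, ha⟩ := ((tendsto_measureReal_Iic_atBot (μ := μ)).eventually_lt_const hw.1).exists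
    exact ⟨a, fun t ht ↦ le_of_not_ge fun hta ↦
      (ht.trans (measureReal_mono (Iic_subset_Iic.2 hta))).not_gt ha⟩
  have attained : w ≤ μ.real (Iic (quantile μ w)) := by
    refine ge_of_tendsto (tendsto_measureReal_Iic_nhdsGT _)
      (eventually_mem_nhdsWithin.mono fun t ht ↦ ?_)
    obtain ⟨u, hu, hut⟩ := exists_lt_of_csInf_lt nonempty ht
    exact hu.trans (measureReal_mono (Iic_subset_Iic.2 hut.le))
  exact ⟨fun h ↦ attained.trans (measureReal_mono (Iic_subset_Iic.2 h)),
    fun h ↦ csInf_le bddBelow h⟩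

theorem aemeasurable_quantile :
    AEMeasurable (quantile μ) (volume.restrict (Ioo 0 (μ.real univ))) :=
  aemeasurable_restrict_of_monotoneOn measurableSet_Ioo fun _ hv _ hw hvw ↦
    (quantile_le_iff hv).2 (hvw.trans ((quantile_le_iff hw).1 le_rfl))

theorem map_quantile :
    (volume.restrict (Ioo 0 (μ.real univ))).map (quantile μ) = μ := by
  refine Measure.ext_of_Iic _ _ fun t ↦ ?_
  calc (volume.restrict (Ioo 0 (μ.real univ))).map (quantile μ) (Iic t)
    _ = volume.restrict (Ioo 0 (μ.real univ)) (Iic (μ.real (Iic t))) := by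
      rw [Measure.map_apply_of_aemeasurable aemeasurable_quantile measurableSet_Iic]
      refine measure_congr ((ae_restrict_mem measurableSet_Ioo).mono fun w hw ↦ ?_)
      exact propext (quantile_le_iff hw)
    _ = volume (Ioc 0 (μ.real (Iic t))) := by
      rw [restrict_Ioo_eq_restrict_Ioc, Measure.restrict_apply measurableSet_Iic, inter_comm,
        Ioc_inter_Iic, inf_eq_right.2 (measureReal_mono (subset_univ _))]
    _ = μ (Iic t) := by
      rw [Real.volume_Ioc, sub_zero, ofReal_measureReal]

theorem exists_monotone_coupling (h : ∀ t, ν (Iic t) ≤ μ (Iic t)) :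
    ∃ π : Measure (ℝ × ℝ), π.fst ≤ μ ∧ π.snd = ν ∧ ∀ᵐ z ∂π, z.1 ≤ z.2 := by
  have hreal (t : ℝ) : ν.real (Iic t) ≤ μ.real (Iic t) :=
    ENNReal.toReal_mono (measure_ne_top μ _) (h t)
  have masses_subset : Ioo 0 (ν.real univ) ⊆ Ioo 0 (μ.real univ) := Ioo_subset_Ioo_right <|
    ENNReal.toReal_mono (measure_ne_top μ _) (measure_univ_le_of_forall_Iic_le h)
  set masses := volume.restrict (Ioo 0 (ν.real univ))
  have hμ : AEMeasurable (quantile μ) masses := aemeasurable_quantile.mono_set masses_subset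
  have hν : AEMeasurable (quantile ν) masses := aemeasurable_quantile
  refine ⟨masses.map fun w ↦ (quantile μ w, quantile ν w), ?_, ?_, ?_⟩
  · rw [Measure.fst_map_prodMk₀ hν]
    exact (Measure.map_mono_of_aemeasurable (Measure.restrict_mono_set _ masses_subset)
      aemeasurable_quantile).trans_eq map_quantile
  · rw [Measure.snd_map_prodMk₀ hμ, map_quantile]
  · refine (ae_map_iff (hμ.prodMk hν) (measurableSet_le measurable_fst measurable_snd)).2 <|
      (ae_restrict_mem measurableSet_Ioo).mono fun w hw ↦ ?_
    exact (quantile_le_iff (masses_subset hw)).2 <|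
      ((quantile_le_iff hw).1 le_rfl).trans (hreal _)

end Quantile

section Exchange

variable {X : Type*} [MeasurableSpace X] {μ : Measure X} [IsFiniteMeasure μ] {ν : Measure (X × X)}

/-- A symmetric coupling of `μ` with itself, given a measure `ν` on pairs with
`ν.fst + ν.snd ≤ μ`: pairs drawn from `ν` swap places and the remaining mass stays put. -/
noncomputable def exchangeCoupling (μ : Measure X) (ν : Measure (X × X)) : Measure (X × X) :=
  ν + ν.map Prod.swap + (μ - (ν.fst + ν.snd)).map fun x ↦ (x, x)

theorem fst_exchangeCoupling (h : ν.fst + ν.snd ≤ μ) : (exchangeCoupling μ ν).fst = μ := by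
  have := isFiniteMeasure_of_le μ h
  have fst_diag : ((μ - (ν.fst + ν.snd)).map fun x ↦ (x, x)).fst = μ - (ν.fst + ν.snd) := by
    rw [Measure.fst_map_prodMk measurable_id', Measure.map_id']
  rw [exchangeCoupling, Measure.fst_add, Measure.fst_add, Measure.fst_map_swap, fst_diag, add_comm,
    Measure.sub_add_cancel_of_le h]

theorem snd_exchangeCoupling (h : ν.fst + ν.snd ≤ μ) : (exchangeCoupling μ ν).snd = μ := by
  have := isFiniteMeasure_of_le μ h
  have snd_diag : ((μ - (ν.fst + ν.snd)).map fun x ↦ (x, x)).snd = μ - (ν.fst + ν.snd) := by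
    rw [Measure.snd_map_prodMk measurable_id', Measure.map_id']
  rw [exchangeCoupling, Measure.snd_add, Measure.snd_add, Measure.snd_map_swap, snd_diag,
    add_comm ν.snd, add_comm, Measure.sub_add_cancel_of_le h]

theorem setLIntegral_exchangeCoupling_add (h : ν.fst + ν.snd ≤ μ) {G : X → ℝ≥0∞}
    (hG : Measurable G) {A : Set X} (hA : MeasurableSet A) :
    ∫⁻ z in Prod.fst ⁻¹' A, G z.2 ∂exchangeCoupling μ ν +
        (∫⁻ z in Prod.fst ⁻¹' A, G z.1 ∂ν + ∫⁻ z in Prod.snd ⁻¹' A, G z.2 ∂ν) =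
      ∫⁻ x in A, G x ∂μ +
        (∫⁻ z in Prod.fst ⁻¹' A, G z.2 ∂ν + ∫⁻ z in Prod.snd ⁻¹' A, G z.1 ∂ν) := by
  have := isFiniteMeasure_of_le μ h
  let ρ := μ - (ν.fst + ν.snd)
  have coupling_eq : ∫⁻ z in Prod.fst ⁻¹' A, G z.2 ∂exchangeCoupling μ ν =
      ∫⁻ z in Prod.fst ⁻¹' A, G z.2 ∂ν + ∫⁻ z in Prod.snd ⁻¹' A, G z.1 ∂ν +
        ∫⁻ x in A, G x ∂ρ := by
    have hG' : Measurable fun z : X × X ↦ G z.2 := hG.comp measurable_snd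
    rw [exchangeCoupling, Measure.restrict_add, Measure.restrict_add, lintegral_add_measure,
      lintegral_add_measure, setLIntegral_map (measurable_fst hA) hG' measurable_swap,
      setLIntegral_map (measurable_fst hA) hG' (by fun_prop)]
    rfl
  have marginal_eq : ∫⁻ x in A, G x ∂μ =
      ∫⁻ x in A, G x ∂ρ +
        (∫⁻ z in Prod.fst ⁻¹' A, G z.1 ∂ν + ∫⁻ z in Prod.snd ⁻¹' A, G z.2 ∂ν) := by
    conv_lhs => rw [← Measure.sub_add_cancel_of_le h]
    rw [Measure.restrict_add, Measure.restrict_add, lintegral_add_measure, lintegral_add_measure,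
      ← setLIntegral_map hA hG measurable_fst, ← setLIntegral_map hA hG measurable_snd]
    rfl
  rw [coupling_eq, marginal_eq]
  ring

theorem exists_invariant_kernel_compProd_eq [StandardBorelSpace X] [Nonempty X]
    {γ : Measure (X × X)} (hfst : γ.fst = μ) (hsnd : γ.snd = μ) :
    ∃ κ : Kernel X X, IsMarkovKernel κ ∧ κ.Invariant μ ∧ μ ⊗ₘ κ = γ := by
  have : IsFiniteMeasure γ := ⟨by rw [← Measure.fst_univ, hfst]; exact measure_lt_top μ univ⟩
  have disintegrate : μ ⊗ₘ γ.condKernel = γ := by rw [← hfst, Measure.disintegrate]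
  refine ⟨γ.condKernel, inferInstance, ?_, disintegrate⟩
  rw [Kernel.Invariant, ← Measure.snd_compProd, disintegrate, hsnd]

end Exchange

section Transport

variable {X Y : Type*} [MeasurableSpace X] [MeasurableSpace Y] {μ : Measure X}

theorem lintegral_tsub_le_lintegral_tsub {f g : X → ℝ≥0∞} (hf : Measurable f) (hg : Measurable g)
    (hf_fin : ∫⁻ x, f x ∂μ ≠ ∞) (hfg : ∫⁻ x, f x ∂μ ≤ ∫⁻ x, g x ∂μ) :
    ∫⁻ x, f x - g x ∂μ ≤ ∫⁻ x, g x - f x ∂μ := by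
  refine (ENNReal.add_le_add_iff_left hf_fin).1 ?_
  calc ∫⁻ x, f x ∂μ + ∫⁻ x, f x - g x ∂μ
    _ ≤ ∫⁻ x, g x ∂μ + ∫⁻ x, f x - g x ∂μ := by gcongr
    _ = ∫⁻ x, f x ∂μ + ∫⁻ x, g x - f x ∂μ := by
      rw [← lintegral_add_left hf, ← lintegral_add_left hg]
      simp only [add_tsub_eq_max, max_comm]

theorem add_le_of_mutuallySingular {μ₁ μ₂ : Measure X} (hsing : μ₁ ⟂ₘ μ₂) (h₁ : μ₁ ≤ μ)
    (h₂ : μ₂ ≤ μ) : μ₁ + μ₂ ≤ μ := by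
  obtain ⟨S, hS, hS₁, hS₂⟩ := hsing
  have ae_mem₁ : ∀ᵐ x ∂μ₁, x ∈ Sᶜ := measure_eq_zero_iff_ae_notMem.1 hS₁
  have ae_mem₂ : ∀ᵐ x ∂μ₂, x ∈ Sᶜᶜ := measure_eq_zero_iff_ae_notMem.1 hS₂
  calc μ₁ + μ₂
    _ = μ₁.restrict Sᶜ + μ₂.restrict Sᶜᶜ := by
      rw [Measure.restrict_eq_self_of_ae_mem ae_mem₁, Measure.restrict_eq_self_of_ae_mem ae_mem₂]
    _ ≤ μ.restrict Sᶜ + μ.restrict Sᶜᶜ := by gcongr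
    _ = μ := Measure.restrict_add_restrict_compl hS.compl

theorem map_withDensity_le {π : Measure Y} {f : Y → X} (hf : Measurable f) {d : X → ℝ≥0∞}
    (hd : Measurable d) (hπ : π.map f ≤ μ.withDensity d) {h : Y → ℝ≥0∞}
    (hh : ∀ᵐ y ∂π, h y ≤ (d (f y))⁻¹) : (π.withDensity h).map f ≤ μ := by
  refine Measure.le_iff.2 fun A hA ↦ ?_
  calc (π.withDensity h).map f A
    _ = ∫⁻ y in f ⁻¹' A, h y ∂π := by
      rw [Measure.map_apply hf hA, withDensity_apply _ (hf hA)]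
    _ ≤ ∫⁻ y in f ⁻¹' A, (d (f y))⁻¹ ∂π := lintegral_mono_ae (ae_restrict_of_ae hh)
    _ = ∫⁻ x in A, (d x)⁻¹ ∂π.map f := (setLIntegral_map hA hd.inv hf).symm
    _ ≤ ∫⁻ x in A, (d x)⁻¹ ∂μ.withDensity d :=
      lintegral_mono' (Measure.restrict_mono_measure hπ A) le_rfl
    _ = (μ.withDensity d).withDensity d⁻¹ A := (withDensity_apply _ hA).symm
    _ ≤ μ A := withDensity_inv_same_le hd.aemeasurable A

/-- The exchange plan that implements a transport plan `π` of surpluses of `G` to deficits of `G`: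
an exchange of `x` and `y` moves `G x - G y` units, so each unit of `π` needs its reciprocal. -/
noncomputable def exchangePlan (G : X → ℝ≥0∞) (π : Measure (X × X)) : Measure (X × X) :=
  π.withDensity fun z ↦ (G z.1 - G z.2)⁻¹

variable {P G : X → ℝ≥0∞} {π : Measure (X × X)}

theorem setLIntegral_exchangePlan (hG : Measurable G)
    (hlt : ∀ᵐ z ∂π, G z.2 < G z.1) (hfin : ∀ᵐ z ∂π, G z.1 ≠ ∞)
    {B : Set (X × X)} (hB : MeasurableSet B) :
    ∫⁻ z in B, G z.1 ∂exchangePlan G π = ∫⁻ z in B, G z.2 ∂exchangePlan G π + π B := by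
  have hG₁ : Measurable fun z : X × X ↦ G z.1 := hG.comp measurable_fst
  have hG₂ : Measurable fun z : X × X ↦ G z.2 := hG.comp measurable_snd
  have hrate : Measurable fun z : X × X ↦ (G z.1 - G z.2)⁻¹ := (hG₁.sub hG₂).inv
  rw [exchangePlan, setLIntegral_withDensity_eq_setLIntegral_mul _ hrate hG₁ hB,
    setLIntegral_withDensity_eq_setLIntegral_mul _ hrate hG₂ hB, ← setLIntegral_one,
    ← lintegral_add_left (hrate.mul hG₂)]
  refine lintegral_congr_ae (ae_restrict_of_ae ?_)
  filter_upwards [hlt, hfin] with z hlt hfin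
  calc (G z.1 - G z.2)⁻¹ * G z.1
    _ = (G z.1 - G z.2)⁻¹ * (G z.2 + (G z.1 - G z.2)) := by rw [add_tsub_cancel_of_le hlt.le]
    _ = (G z.1 - G z.2)⁻¹ * G z.2 + 1 := by
      rw [mul_add, ENNReal.inv_mul_cancel (tsub_pos_of_lt hlt).ne' (ENNReal.sub_ne_top hfin)]

theorem ae_lt_of_le_withDensity_sub {ν : Measure X} (hP : Measurable P) (hG : Measurable G)
    (hν : ν ≤ μ.withDensity (G - P)) : ∀ᵐ x ∂ν, P x < G x :=
  Measure.absolutelyContinuous_of_le hν <| (ae_withDensity_iff (hG.sub hP)).2 <|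
    .of_forall fun _ hx ↦ tsub_pos_iff_lt.1 (pos_of_ne_zero hx)

theorem fst_exchangePlan_add_snd_le (hP : Measurable P) (hG : Measurable G)
    (hsource : π.fst ≤ μ.withDensity (G - P)) (htarget : π.snd ≤ μ.withDensity (P - G))
    (hle : ∀ᵐ z ∂π, P z.2 ≤ P z.1) :
    (exchangePlan G π).fst + (exchangePlan G π).snd ≤ μ := by
  have source : ∀ᵐ z ∂π, P z.1 < G z.1 :=
    ae_of_ae_map measurable_fst.aemeasurable (ae_lt_of_le_withDensity_sub hP hG hsource)
  have target : ∀ᵐ z ∂π, G z.2 < P z.2 :=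
    ae_of_ae_map measurable_snd.aemeasurable (ae_lt_of_le_withDensity_sub hG hP htarget)
  have plan_ac : exchangePlan G π ≪ π := withDensity_absolutelyContinuous π _
  have hdeficit : MeasurableSet {x | G x < P x} := measurableSet_lt hG hP
  refine add_le_of_mutuallySingular ⟨{x | G x < P x}, hdeficit, ?_, ?_⟩ ?_ ?_
  · rw [Measure.fst_apply hdeficit, measure_eq_zero_iff_ae_notMem]
    exact plan_ac (source.mono fun z hz ↦ hz.not_gt)
  · rw [Measure.snd_apply hdeficit.compl, measure_eq_zero_iff_ae_notMem]
    exact plan_ac (target.mono fun z hz ↦ not_not_intro hz)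
  · refine map_withDensity_le measurable_fst (hG.sub hP) hsource ?_
    filter_upwards [target, hle] with z target hle
    exact ENNReal.inv_le_inv.2 (tsub_le_tsub_left (target.le.trans hle) _)
  · refine map_withDensity_le measurable_snd (hP.sub hG) htarget ?_
    filter_upwards [source, hle] with z source hle
    exact ENNReal.inv_le_inv.2 (tsub_le_tsub_right (hle.trans source.le) _)

theorem setLIntegral_exchangeCoupling_exchangePlan_add [IsFiniteMeasure μ] (hG : Measurable G)
    (hG_fin : ∫⁻ x, G x ∂μ ≠ ∞) (hlt : ∀ᵐ z ∂π, G z.2 < G z.1) (hfin : ∀ᵐ z ∂π, G z.1 ≠ ∞)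
    (hplan : (exchangePlan G π).fst + (exchangePlan G π).snd ≤ μ)
    {A : Set X} (hA : MeasurableSet A) :
    ∫⁻ z in Prod.fst ⁻¹' A, G z.2 ∂exchangeCoupling μ (exchangePlan G π) + π.fst A =
      ∫⁻ x in A, G x ∂μ + π.snd A := by
  have received_fin : ∫⁻ z in Prod.fst ⁻¹' A, G z.2 ∂exchangePlan G π +
      ∫⁻ z in Prod.snd ⁻¹' A, G z.2 ∂exchangePlan G π ≠ ∞ := by
    have : ∫⁻ z, G z.2 ∂exchangePlan G π ≠ ∞ := by
      refine ne_top_of_le_ne_top hG_fin ?_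
      rw [← lintegral_map hG measurable_snd]
      exact lintegral_mono' ((Measure.le_add_left le_rfl).trans hplan) le_rfl
    exact ENNReal.add_ne_top.2 ⟨ne_top_of_le_ne_top this (setLIntegral_le_lintegral _ _),
      ne_top_of_le_ne_top this (setLIntegral_le_lintegral _ _)⟩
  have balance := setLIntegral_exchangeCoupling_add hplan hG hA
  rw [setLIntegral_exchangePlan hG hlt hfin (measurable_fst hA),
    setLIntegral_exchangePlan hG hlt hfin (measurable_snd hA), ← Measure.fst_apply hA,
    ← Measure.snd_apply hA] at balance
  refine (ENNReal.add_left_inj received_fin).1 (Eq.trans ?_ (balance.trans ?_)) <;> ring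

theorem exists_invariant_kernel_ge_of_transport [StandardBorelSpace X] [Nonempty X]
    [IsFiniteMeasure μ] (hP : Measurable P) (hG : Measurable G) (hG_fin : ∫⁻ x, G x ∂μ ≠ ∞)
    (hsource : π.fst ≤ μ.withDensity (G - P)) (htarget : π.snd = μ.withDensity (P - G))
    (hle : ∀ᵐ z ∂π, P z.2 ≤ P z.1) :
    ∃ κ : Kernel X X, IsMarkovKernel κ ∧ κ.Invariant μ ∧ P ≤ᵐ[μ] fun x ↦ ∫⁻ y, G y ∂κ x := by
  have hplan := fst_exchangePlan_add_snd_le hP hG hsource htarget.le hle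
  have source : ∀ᵐ z ∂π, P z.1 < G z.1 :=
    ae_of_ae_map measurable_fst.aemeasurable (ae_lt_of_le_withDensity_sub hP hG hsource)
  have target : ∀ᵐ z ∂π, G z.2 < P z.2 :=
    ae_of_ae_map measurable_snd.aemeasurable (ae_lt_of_le_withDensity_sub hG hP htarget.le)
  have hlt : ∀ᵐ z ∂π, G z.2 < G z.1 := by
    filter_upwards [source, target, hle] with z source target hle
    exact (target.trans_le hle).trans source
  have hfin : ∀ᵐ z ∂π, G z.1 ≠ ∞ := ae_of_ae_map measurable_fst.aemeasurable <|
    ((Measure.absolutelyContinuous_of_le hsource).trans (withDensity_absolutelyContinuous μ _))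
      ((ae_lt_top hG hG_fin).mono fun _ ↦ ne_of_lt)
  obtain ⟨κ, hκ, hinv, hcomp⟩ :=
    exists_invariant_kernel_compProd_eq (fst_exchangeCoupling hplan) (snd_exchangeCoupling hplan)
  refine ⟨κ, hκ, hinv, ae_le_of_forall_setLIntegral_le_of_sigmaFinite hP fun A hA _ ↦ ?_⟩
  have surplus_fin : ∫⁻ x in A, G x - P x ∂μ ≠ ∞ := ne_top_of_le_ne_top hG_fin <|
    (setLIntegral_le_lintegral _ _).trans (lintegral_mono fun _ ↦ tsub_le_self)
  refine (ENNReal.add_le_add_iff_right surplus_fin).1 ?_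
  calc ∫⁻ x in A, P x ∂μ + ∫⁻ x in A, G x - P x ∂μ
    _ = ∫⁻ x in A, G x ∂μ + ∫⁻ x in A, P x - G x ∂μ := by
      rw [← lintegral_add_left hP, ← lintegral_add_left hG]
      simp only [add_tsub_eq_max, max_comm]
    _ = ∫⁻ x in A, G x ∂μ + π.snd A := by
      rw [htarget, withDensity_apply _ hA]
      rfl
    _ = ∫⁻ x in A, ∫⁻ y, G y ∂κ x ∂μ + π.fst A := by
      rw [← setLIntegral_exchangeCoupling_exchangePlan_add hG hG_fin hlt hfin hplan hA, ← hcomp,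
        ← prod_univ, Measure.setLIntegral_compProd (f := fun z ↦ G z.2) (hG.comp measurable_snd)
          hA .univ]
      simp only [Measure.restrict_univ]
    _ ≤ ∫⁻ x in A, ∫⁻ y, G y ∂κ x ∂μ + ∫⁻ x in A, G x - P x ∂μ := by
      gcongr
      exact (hsource A).trans_eq (withDensity_apply _ hA)

theorem exists_invariant_kernel_ge_of_majorized {μ : Measure ℝ} [IsFiniteMeasure μ]
    {P G : ℝ → ℝ≥0∞} (hP : Antitone P) (hG : Measurable G) (hG_fin : ∫⁻ x, G x ∂μ ≠ ∞)
    (hmaj : ∀ t, ∫⁻ x in Iic t, P x ∂μ ≤ ∫⁻ x in Iic t, G x ∂μ) :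
    ∃ κ : Kernel ℝ ℝ, IsMarkovKernel κ ∧ κ.Invariant μ ∧ P ≤ᵐ[μ] fun x ↦ ∫⁻ y, G y ∂κ x := by
  have hP_fin : ∫⁻ x, P x ∂μ ≠ ∞ := by
    refine ne_top_of_le_ne_top hG_fin ?_
    simpa using measure_univ_le_of_forall_Iic_le (μ := μ.withDensity G) (ν := μ.withDensity P)
      (by simpa only [withDensity_apply _ measurableSet_Iic] using hmaj)
  have : IsFiniteMeasure (μ.withDensity (G - P)) := isFiniteMeasure_withDensity <|
    ne_top_of_le_ne_top hG_fin (lintegral_mono fun _ ↦ tsub_le_self)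
  have : IsFiniteMeasure (μ.withDensity (P - G)) := isFiniteMeasure_withDensity <|
    ne_top_of_le_ne_top hP_fin (lintegral_mono fun _ ↦ tsub_le_self)
  have deficit_le_surplus (t : ℝ) :
      μ.withDensity (P - G) (Iic t) ≤ μ.withDensity (G - P) (Iic t) := by
    rw [withDensity_apply _ measurableSet_Iic, withDensity_apply _ measurableSet_Iic]
    exact lintegral_tsub_le_lintegral_tsub hP.measurable hG
      (ne_top_of_le_ne_top hP_fin (setLIntegral_le_lintegral _ _)) (hmaj t)
  obtain ⟨π, hsource, htarget, hle⟩ := exists_monotone_coupling deficit_le_surplus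
  exact exists_invariant_kernel_ge_of_transport hP.measurable hG hG_fin hsource htarget
    (hle.mono fun _ h ↦ hP h)

end Transport

section LowestTypeRule

variable {ι : Type*}

/-- The type profiles in which `s` has a type strictly lower than everybody else's. -/
def strictMinSet (s : ι) : Set (ι → ℝ) :=
  {y | ∀ j ≠ s, y s < y j}

theorem disjoint_strictMinSet {s t : ι} (hst : s ≠ t) :
    Disjoint (strictMinSet s) (strictMinSet t) :=
  disjoint_left.2 fun _ hs ht ↦ (hs t hst.symm).not_gt (ht s hst)

theorem measurableSet_strictMinSet [Countable ι] (s : ι) : MeasurableSet (strictMinSet s) := by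
  simp only [strictMinSet, ofPred_forall]
  exact .iInter fun j ↦ .iInter fun _ ↦
    measurableSet_lt (measurable_pi_apply s) (measurable_pi_apply j)

variable [Fintype ι]

theorem sum_measure_strictMinSet_le_one (ρ : Measure (ι → ℝ)) [IsProbabilityMeasure ρ] :
    ∑ s, ρ (strictMinSet s) ≤ 1 :=
  (sum_measure_le_measure_univ (fun s _ ↦ (measurableSet_strictMinSet s).nullMeasurableSet)
    fun _ _ _ _ hst ↦ (disjoint_strictMinSet hst).aedisjoint).trans_eq measure_univ

theorem pi_update_strictMinSet [DecidableEq ι] (μ ν : Measure ℝ) [IsProbabilityMeasure μ]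
    [IsProbabilityMeasure ν] (s : ι) :
    Measure.pi (update (fun _ ↦ μ) s ν) (strictMinSet s) =
      ∫⁻ y, μ (Ioi y) ^ (Fintype.card ι - 1) ∂ν := by
  have hmin := measurableSet_strictMinSet s
  have slice (y : ℝ) :
      Prod.mk y ⁻¹' ((fun z : ℝ × (ι → ℝ) ↦ update z.2 s z.1) ⁻¹' strictMinSet s) =
        univ.pi (update (fun _ ↦ Ioi y) s univ) := by
    ext q
    simp +contextual [strictMinSet, forall_update_iff (fun _ ↦ Ioi y) (fun i C ↦ q i ∈ C)]
  rw [← map_update_prod_pi, Measure.map_apply (measurable_update_prod s) hmin,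
    Measure.prod_apply (measurable_update_prod s hmin)]
  refine lintegral_congr fun y ↦ ?_
  rw [slice, Measure.pi_pi, ← Finset.mul_prod_erase _ _ (Finset.mem_univ s), update_self,
    measure_univ, one_mul, ← Finset.card_univ, ← Finset.card_erase_of_mem (Finset.mem_univ s)]
  exact Finset.prod_eq_pow_card fun i hi ↦ by rw [update_of_ne (Finset.ne_of_mem_erase hi)]

/-- The probability that `s` has the strictly lowest type once every type has been redrawn
independently according to `κ`. -/
noncomputable def lowestTypeRule (κ : Kernel ℝ ℝ) [IsMarkovKernel κ] (s : ι) (q : ι → ℝ) : ℝ≥0∞ :=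
  piKernel (fun _ ↦ κ) q (strictMinSet s)

variable {μ : Measure ℝ} [IsProbabilityMeasure μ] {κ : Kernel ℝ ℝ} [IsMarkovKernel κ]

theorem measurable_lowestTypeRule (s : ι) : Measurable (lowestTypeRule κ s) :=
  Kernel.measurable_coe _ (measurableSet_strictMinSet s)

theorem sum_lowestTypeRule_le_one (q : ι → ℝ) : ∑ s, lowestTypeRule κ s q ≤ 1 :=
  sum_measure_strictMinSet_le_one _

theorem interim_lowestTypeRule [DecidableEq ι] (hκ : κ.Invariant μ) (s : ι) (x : ℝ) :
    interim (fun _ ↦ μ) s (lowestTypeRule κ s) x =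
      ∫⁻ y, μ (Ioi y) ^ (Fintype.card ι - 1) ∂κ x := by
  have redrawn : (fun i ↦ (update (fun _ ↦ μ) s (Measure.dirac x) i).bind κ) =
      update (fun _ ↦ μ) s (κ x) := by
    ext1 i
    obtain rfl | hi := eq_or_ne i s
    · simp only [update_self, Measure.dirac_bind κ.measurable]
    · rw [update_of_ne hi, update_of_ne hi]
      exact hκ
  rw [interim_eq_lintegral_pi _ (measurable_lowestTypeRule s), ← pi_update_strictMinSet, ← redrawn,
    ← bind_piKernel, Measure.bind_apply (measurableSet_strictMinSet s) (Kernel.aemeasurable _)]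
  rfl

theorem exists_interim_eq_of_majorized [DecidableEq ι] {P : ℝ → ℝ≥0∞} (hP : Antitone P)
    (hmaj : ∀ t, ∫⁻ x in Iic t, P x ∂μ ≤ ∫⁻ x in Iic t, μ (Ioi x) ^ (Fintype.card ι - 1) ∂μ) :
    ∃ p : ι → (ι → ℝ) → ℝ≥0∞, (∀ s, Measurable (p s)) ∧ (∀ q, ∑ s, p s q ≤ 1) ∧
      ∀ s, interim (fun _ ↦ μ) s (p s) =ᵐ[μ] P := by
  let G (x : ℝ) : ℝ≥0∞ := μ (Ioi x) ^ (Fintype.card ι - 1)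
  have hG : Measurable G :=
    Antitone.measurable fun x y hxy ↦ pow_le_pow_left' (measure_mono (Ioi_subset_Ioi hxy)) _
  have hG_fin (ρ : Measure ℝ) [IsProbabilityMeasure ρ] : ∫⁻ x, G x ∂ρ ≠ ∞ :=
    ne_top_of_le_ne_top ENNReal.one_ne_top <|
      (lintegral_mono fun _ ↦ pow_le_one' prob_le_one _).trans_eq (by simp)
  obtain ⟨κ, hκ, hinv, hPκ⟩ := exists_invariant_kernel_ge_of_majorized hP hG (hG_fin μ) hmaj
  let Q (x : ℝ) : ℝ≥0∞ := ∫⁻ y, G y ∂κ x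
  have hQ : Measurable Q := hG.lintegral_kernel
  refine ⟨fun s q ↦ min 1 (P (q s) / Q (q s)) * lowestTypeRule κ s q, fun s ↦ ?_, fun q ↦ ?_,
    fun s ↦ ?_⟩
  · have := measurable_lowestTypeRule (κ := κ) s
    have := hP.measurable
    fun_prop
  · exact (Finset.sum_le_sum fun s _ ↦ mul_le_of_le_one_left' (min_le_left _ _)).trans
      (sum_lowestTypeRule_le_one q)
  · filter_upwards [hPκ] with x hx
    have interim_rule : interim (fun _ ↦ μ) s (lowestTypeRule κ s) x = Q x :=
      interim_lowestTypeRule hinv s x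
    rw [interim_comp_eval_mul _ (measurable_lowestTypeRule s) s (fun x ↦ min 1 (P x / Q x)),
      interim_rule, min_eq_right (ENNReal.div_le_of_le_mul (by rwa [one_mul])),
      ENNReal.div_mul_cancel' (fun h ↦ le_zero_iff.1 (h ▸ hx)) fun h ↦ absurd h (hG_fin (κ x))]

end LowestTypeRule

section Uniform

/-- The uniform law on `[0, 1]`. -/
noncomputable abbrev uniform : Measure ℝ :=
  volume.restrict (Icc (0 : ℝ) 1)

instance : IsProbabilityMeasure uniform :=
  ⟨by simp⟩

theorem uniform_Ioi {x : ℝ} (hx : x ∈ Icc (0 : ℝ) 1) :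
    uniform (Ioi x) = ENNReal.ofReal (1 - x) := by
  have inter_eq : Ioi x ∩ Icc 0 1 = Ioc x 1 := by
    ext y
    exact ⟨fun hy ↦ ⟨hy.1, hy.2.2⟩, fun hy ↦ ⟨hy.1, hx.1.trans hy.1.le, hy.2⟩⟩
  rw [Measure.restrict_apply measurableSet_Ioi, inter_eq, Real.volume_Ioc]

theorem setLIntegral_Iic_uniform {f : ℝ → ℝ} (hf : IntegrableOn f (Icc 0 1))
    (hf_nonneg : ∀ x ∈ Icc (0 : ℝ) 1, 0 ≤ f x) (t : ℝ) :
    ∫⁻ x in Iic t, ENNReal.ofReal (f x) ∂uniform =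
      ENNReal.ofReal (∫ s in (0 : ℝ)..projIcc 0 1 zero_le_one t, f s) := by
  set c := projIcc (0 : ℝ) 1 zero_le_one t
  have restrict_eq : uniform.restrict (Iic t) = volume.restrict (Ioc 0 (c : ℝ)) := by
    rw [uniform, ← restrict_Ioc_eq_restrict_Icc, Measure.restrict_restrict measurableSet_Iic]
    congr 1
    ext x
    simp only [c, coe_projIcc, mem_inter_iff, mem_Iic, mem_Ioc, le_max_iff, le_min_iff]
    grind
  have Ioc_subset : Ioc 0 (c : ℝ) ⊆ Icc 0 1 := fun x hx ↦ ⟨hx.1.le, hx.2.trans c.2.2⟩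
  rw [restrict_eq, intervalIntegral.integral_of_le c.2.1, ofReal_integral_eq_lintegral_ofReal
    (hf.mono_set Ioc_subset) ((ae_restrict_mem measurableSet_Ioc).mono fun x hx ↦
      hf_nonneg x (Ioc_subset hx))]

theorem integral_one_sub_pow {n : ℕ} (hn : n ≠ 0) (t : ℝ) :
    ∫ s in (0 : ℝ)..t, (1 - s) ^ (n - 1) = (1 - (1 - t) ^ n) / n := by
  obtain ⟨m, rfl⟩ := Nat.exists_eq_succ_of_ne_zero hn
  rw [intervalIntegral.integral_comp_sub_left fun s ↦ s ^ (m.succ - 1), integral_pow]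
  simp

theorem setLIntegral_Iic_uniform_Ioi_pow {n : ℕ} (hn : n ≠ 0) (t : ℝ) :
    ∫⁻ x in Iic t, uniform (Ioi x) ^ (n - 1) ∂uniform =
      ENNReal.ofReal ((1 - (1 - (projIcc 0 1 zero_le_one t : ℝ)) ^ n) / n) := by
  have hcont : Continuous fun x : ℝ ↦ (1 - x) ^ (n - 1) := by fun_prop
  rw [← integral_one_sub_pow hn, ← setLIntegral_Iic_uniform
    hcont.continuousOn.integrableOn_Icc fun x hx ↦ pow_nonneg (sub_nonneg.2 hx.2) _]
  refine lintegral_congr_ae (ae_restrict_of_ae ((ae_restrict_mem measurableSet_Icc).mono ?_))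
  intro x hx
  simp only [uniform_Ioi hx, ENNReal.ofReal_pow (sub_nonneg.2 hx.2)]

theorem exists_antitone_eqOn_Icc {α β : Type*} [LinearOrder α]
    [ConditionallyCompleteLinearOrder β] {f : α → β} {a b : α} (hab : a ≤ b)
    (hf : AntitoneOn f (Icc a b)) : ∃ g, Antitone g ∧ EqOn f g (Icc a b) :=
  hf.exists_antitone_extension
    ⟨f b, forall_mem_image.2 fun _ hx ↦ hf hx (right_mem_Icc.2 hab) hx.2⟩
    ⟨f a, forall_mem_image.2 fun _ hx ↦ hf (left_mem_Icc.2 hab) hx hx.1⟩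

variable {ι : Type*} [Fintype ι] [DecidableEq ι] [Nonempty ι] {P : ℝ → ℝ}

theorem integral_le_of_integral_update_eq (hP : IntegrableOn P (Icc 0 1))
    (hP_nonneg : ∀ x ∈ Icc (0 : ℝ) 1, 0 ≤ P x) {p : ι → (ι → ℝ) → ℝ}
    (hp : ∀ s, Measurable (p s)) (hp_mem : ∀ s q, p s q ∈ Icc (0 : ℝ) 1)
    (hsum : ∀ᵐ q ∂Measure.pi fun _ : ι ↦ uniform, ∑ s, p s q ≤ 1)
    (hinterim : ∀ s, ∀ᵐ x ∂uniform,
      ∫ q, p s (update q s x) ∂Measure.pi (fun _ ↦ uniform) = P x)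
    {t : ℝ} (ht : t ∈ Icc (0 : ℝ) 1) :
    ∫ s in (0 : ℝ)..t, P s ≤ (1 - (1 - t) ^ Fintype.card ι) / Fintype.card ι := by
  have interim_mass (s : ι) :
      ∫⁻ x in Iic t, interim (fun _ ↦ uniform) s (fun q ↦ ENNReal.ofReal (p s q)) x ∂uniform =
        ENNReal.ofReal (∫ s in (0 : ℝ)..t, P s) := by
    have integral_eq := setLIntegral_Iic_uniform hP hP_nonneg t
    rw [projIcc_of_mem _ ht] at integral_eq
    rw [← integral_eq]
    refine lintegral_congr_ae (ae_restrict_of_ae ((hinterim s).mono fun x hx ↦ ?_))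
    simp only [interim_ofReal _ (hp s) (hp_mem s), hx]
  have set_bound := sum_setLIntegral_interim_le (fun _ ↦ uniform)
    (p := fun s q ↦ ENNReal.ofReal (p s q)) (fun s ↦ (hp s).ennreal_ofReal)
    (hsum.mono fun q hq ↦ by
      rw [← ENNReal.ofReal_sum_of_nonneg fun s _ ↦ (hp_mem s q).1]
      exact ENNReal.ofReal_le_one.2 hq)
    (A := fun _ ↦ Iic t) fun _ ↦ measurableSet_Iic
  have pow_le_one : (1 - t) ^ Fintype.card ι ≤ 1 :=
    pow_le_one₀ (sub_nonneg.2 ht.2) (sub_le_self _ ht.1)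
  simp only [interim_mass, compl_Iic, uniform_Ioi ht, Finset.sum_const, Finset.prod_const,
    Finset.card_univ, ← ENNReal.ofReal_nsmul, ← ENNReal.ofReal_pow (sub_nonneg.2 ht.2),
    ← ENNReal.ofReal_one, ← ENNReal.ofReal_sub _ (pow_nonneg (sub_nonneg.2 ht.2) _)] at set_bound
  rw [ENNReal.ofReal_le_ofReal_iff (sub_nonneg.2 pow_le_one), nsmul_eq_mul] at set_bound
  rwa [le_div_iff₀' (Nat.cast_pos.2 Fintype.card_pos)]

theorem exists_integral_update_eq_of_integral_le (hP_nonneg : ∀ x ∈ Icc (0 : ℝ) 1, 0 ≤ P x)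
    (hP_anti : AntitoneOn P (Icc 0 1))
    (hmaj : ∀ t ∈ Icc (0 : ℝ) 1,
      ∫ s in (0 : ℝ)..t, P s ≤ (1 - (1 - t) ^ Fintype.card ι) / Fintype.card ι) :
    ∃ p : ι → (ι → ℝ) → ℝ, (∀ s, Measurable (p s)) ∧ (∀ s q, p s q ∈ Icc (0 : ℝ) 1) ∧
      (∀ q, ∑ s, p s q ≤ 1) ∧ ∀ s, ∀ᵐ x ∂uniform,
        ∫ q, p s (update q s x) ∂Measure.pi (fun _ ↦ uniform) = P x := by
  obtain ⟨P', hP'_anti, hPP'⟩ := exists_antitone_eqOn_Icc zero_le_one hP_anti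
  have ofReal_anti : Antitone fun x ↦ ENNReal.ofReal (P' x) :=
    fun _ _ hxy ↦ ENNReal.ofReal_le_ofReal (hP'_anti hxy)
  have majorized (t : ℝ) : ∫⁻ x in Iic t, ENNReal.ofReal (P' x) ∂uniform ≤
      ∫⁻ x in Iic t, uniform (Ioi x) ^ (Fintype.card ι - 1) ∂uniform := by
    rw [setLIntegral_Iic_uniform_Ioi_pow Fintype.card_ne_zero]
    refine Eq.trans_le ?_ (ENNReal.ofReal_le_ofReal (hmaj _ (projIcc 0 1 zero_le_one t).2))
    rw [← setLIntegral_Iic_uniform (hP_anti.integrableOn_isCompact isCompact_Icc) hP_nonneg]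
    refine lintegral_congr_ae (ae_restrict_of_ae ((ae_restrict_mem measurableSet_Icc).mono ?_))
    intro x hx
    simp only [hPP' hx]
  obtain ⟨p, hp, hsum, hinterim⟩ := exists_interim_eq_of_majorized ofReal_anti majorized
  have hp_le (s : ι) (q : ι → ℝ) : p s q ≤ 1 :=
    (Finset.single_le_sum_of_canonicallyOrdered (Finset.mem_univ s)).trans (hsum q)
  have hp_fin (s : ι) (q : ι → ℝ) : p s q ≠ ∞ := ne_top_of_le_ne_top ENNReal.one_ne_top (hp_le s q)
  have hp_mem (s : ι) (q : ι → ℝ) : (p s q).toReal ∈ Icc (0 : ℝ) 1 :=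
    ⟨ENNReal.toReal_nonneg, ENNReal.toReal_mono ENNReal.one_ne_top (hp_le s q)⟩
  refine ⟨fun s q ↦ (p s q).toReal, fun s ↦ (hp s).ennreal_toReal, hp_mem, fun q ↦ ?_,
    fun s ↦ ?_⟩
  · rw [← ENNReal.toReal_sum fun s _ ↦ hp_fin s q]
    exact ENNReal.toReal_mono ENNReal.one_ne_top (hsum q)
  · filter_upwards [hinterim s, ae_restrict_mem measurableSet_Icc] with x hinterim hx
    calc ∫ q, (p s (update q s x)).toReal ∂Measure.pi (fun _ ↦ uniform)
      _ = (interim (fun _ ↦ uniform) s (p s) x).toReal :=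
        integral_toReal ((hp s).comp measurable_update_left).aemeasurable
          (.of_forall fun _ ↦ (hp_fin s _).lt_top)
      _ = P x := by rw [hinterim, ← hPP' hx, ENNReal.toReal_ofReal (hP_nonneg x hx)]

end Uniform

end Border

/-- **Border's condition.** A nonincreasing `P : [0,1] → [0,1]` is the
interim allocation of a feasible ex-post allocation rule with i.i.d. uniform types on
`[0,1]` if and only if `∫₀ᵗ P ≤ ∫₀ᵗ (1−s)^{n−1} ds = (1 − (1−t)ⁿ)/n` for all `t ∈ [0,1]`. -/
theorem stmt_2 (n : ℕ) (hn : 2 ≤ n)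
    (P : ℝ → ℝ)
    (hP_mem : ∀ x ∈ Icc (0:ℝ) 1, P x ∈ Icc (0:ℝ) 1)
    (hP_anti : AntitoneOn P (Icc (0:ℝ) 1)) :
    (∀ t ∈ Icc (0:ℝ) 1,
        (∫ s in (0:ℝ)..t, (1 - s) ^ (n - 1)) = (1 - (1 - t) ^ n) / (n : ℝ)) ∧
    ((∃ p : Fin n → (Fin n → ℝ) → ℝ,
        (∀ s, Measurable (p s)) ∧
        (∀ s q, p s q ∈ Icc (0:ℝ) 1) ∧
        (∀ q : Fin n → ℝ, (∀ k, q k ∈ Icc (0:ℝ) 1) → (∑ s, p s q) ≤ 1) ∧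
        (∀ s : Fin n, ∀ᵐ x ∂(volume.restrict (Icc (0:ℝ) 1)),
          (∫ q : Fin n → ℝ, p s (Function.update q s x) ∂(pimeas n)) = P x)) ↔
      ∀ t ∈ Icc (0:ℝ) 1, (∫ s in (0:ℝ)..t, P s) ≤ (1 - (1 - t) ^ n) / (n : ℝ)) := by
  have hn₀ : n ≠ 0 := by lia
  have : Nonempty (Fin n) := ⟨⟨0, by lia⟩⟩
  have hP_nonneg (x : ℝ) (hx : x ∈ Icc (0 : ℝ) 1) : 0 ≤ P x := (hP_mem x hx).1
  refine ⟨fun t _ ↦ Border.integral_one_sub_pow hn₀ t, ?_, fun hmaj ↦ ?_⟩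
  · rintro ⟨p, hp, hp_mem, hsum, hinterim⟩ t ht
    have hcube : ∀ᵐ q ∂Measure.pi fun _ : Fin n ↦ Border.uniform, ∀ k, q k ∈ Icc (0 : ℝ) 1 :=
      ae_all_iff.2 fun _ ↦ Measure.tendsto_eval_ae_ae (ae_restrict_mem measurableSet_Icc)
    simpa only [Fintype.card_fin] using Border.integral_le_of_integral_update_eq
      (hP_anti.integrableOn_isCompact isCompact_Icc) hP_nonneg hp hp_mem (hcube.mono hsum)
      hinterim ht
  · obtain ⟨p, hp, hp_mem, hsum, hinterim⟩ := Border.exists_integral_update_eq_of_integral_le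
      (ι := Fin n) hP_nonneg hP_anti (by simpa only [Fintype.card_fin] using hmaj)
    exact ⟨p, hp, hp_mem, fun q _ ↦ hsum q, hinterim⟩
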